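/- Membership in a Q-stopper is constant along a chain: for q ∈ Q, the chain element Sum.inr q lies in a Q-stopper if and only if Sum.inl (g q) lies in a Q-stopper; likewise, for p ∈ P, Sum.inl p lies in a Q-stopper if and only if Sum.inr (f p) lies in a Q-stopper. -/

import Mathlib

def SB.Valid {α β : Type*} (P : Set α) (Q : Set β) : α ⊕ β → Prop
  | Sum.inl p => p ∈ P
  | Sum.inr q => q ∈ Q

def SB.step {α β : Type*} (f : α → β) (g : β → α) : α ⊕ β → α ⊕ β
  | Sum.inl p => Sum.inr (f p)
  | Sum.inr q => Sum.inl (g q)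

def SB.ChainLE {α β : Type*} (f : α → β) (g : β → α) : α ⊕ β → α ⊕ β → Prop :=
  Relation.ReflTransGen (fun x y => y = SB.step f g x)

def SB.Initial {α β : Type*} (P : Set α) (Q : Set β) (f : α → β) (g : β → α) :
    α ⊕ β → Prop
  | Sum.inl p => p ∉ g '' Q
  | Sum.inr q => q ∉ f '' P

def SB.InQStopper {α β : Type*} (P : Set α) (Q : Set β) (f : α → β) (g : β → α)
    (x : α ⊕ β) : Prop :=
  ∃ q ∈ Q, SB.Initial P Q f g (Sum.inr q) ∧ SB.ChainLE f g (Sum.inr q) x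

theorem SB.valid_of_chainLE {α β : Type*} {P : Set α} {Q : Set β}
    {f : α → β} {g : β → α}
    (hfm : Set.MapsTo f P Q) (hgm : Set.MapsTo g Q P) {x y : α ⊕ β}
    (hx : SB.Valid P Q x) (h : SB.ChainLE f g x y) : SB.Valid P Q y := by
  unfold SB.ChainLE at h
  induction h with
  | refl => exact hx
  | tail _ hbc ih =>
    subst hbc
    rename_i b _
    rcases b with p | q
    · exact hfm ih
    · exact hgm ih

theorem inQStopper_constant_along_chain {α β : Type*} (P : Set α) (Q : Set β)
    (f : α → β) (g : β → α)
    (hfm : Set.MapsTo f P Q) (hfi : Set.InjOn f P)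
    (hgm : Set.MapsTo g Q P) (hgi : Set.InjOn g Q) :
    (∀ q ∈ Q, SB.InQStopper P Q f g (Sum.inr q) ↔
      SB.InQStopper P Q f g (Sum.inl (g q))) ∧
    (∀ p ∈ P, SB.InQStopper P Q f g (Sum.inl p) ↔
      SB.InQStopper P Q f g (Sum.inr (f p))) := by
  refine ⟨fun q hq => ⟨?_, ?_⟩, fun p hp => ⟨?_, ?_⟩⟩
  · rintro ⟨r, hr, hi, hc⟩
    exact ⟨r, hr, hi, Relation.ReflTransGen.tail hc rfl⟩
  · rintro ⟨r, hr, hi, hc⟩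
    refine ⟨r, hr, hi, ?_⟩
    rcases Relation.ReflTransGen.cases_tail hc with h | ⟨z, hz, h⟩
    · cases h
    · have hv : SB.Valid P Q z := SB.valid_of_chainLE hfm hgm (x := Sum.inr r) hr hz
      rcases z with a | b
      · cases h
      · have hb : q = b := hgi hq hv (Sum.inl.inj h)
        subst hb
        exact hz
  · rintro ⟨r, hr, hi, hc⟩
    exact ⟨r, hr, hi, Relation.ReflTransGen.tail hc rfl⟩
  · rintro ⟨r, hr, hi, hc⟩
    refine ⟨r, hr, hi, ?_⟩
    rcases Relation.ReflTransGen.cases_tail hc with h | ⟨z, hz, h⟩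
    · exact absurd ⟨p, hp, Sum.inr.inj h⟩ hi
    · have hv : SB.Valid P Q z := SB.valid_of_chainLE hfm hgm (x := Sum.inr r) hr hz
      rcases z with a | b
      · have ha : p = a := hfi hp hv (Sum.inr.inj h)
        subst ha
        exact hz
      · cases h
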